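/- Let μ, δ, c ∈ ℝ and 0 < ρ < 1, and let e^{μ,δ}_{1,ρ}(z) = Σ_{n=0}^∞ z^n/(Γ(n+μ)·Γ(δ−ρn)). Then for every z > 0 the function z ↦ z^{δ−1}·e^{μ,δ}_{1,ρ}(c·z^{−ρ}) is differentiable and (d/dz)( z^{δ−1}·e^{μ,δ}_{1,ρ}(c·z^{−ρ}) ) = z^{δ−2}·e^{μ,δ−1}_{1,ρ}(c·z^{−ρ}). -/

import Mathlib

/- The Wright-type function `e^{μ,δ}_{1,ρ}(z) = Σ_{n≥0} zⁿ/(Γ(n+μ)·Γ(δ−ρn))`;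
`Real.Gamma` vanishes at nonpositive integers, realizing the convention `1/Γ = 0` there. -/
noncomputable def wrightE (ρ μ δ z : ℝ) : ℝ :=
  ∑' n : ℕ, z ^ n / (Real.Gamma ((n : ℝ) + μ) * Real.Gamma (δ - ρ * n))

/-!
For `0 < ρ < 1` the reflection formula bounds `|1/Γ(δ - ρn)|` by `Γ(1 - δ + ρn)`, whose consecutive
ratios are eventually at most `(n + μ)^ρ` by Wendel's inequality, while those of `Γ(n + μ)` equal
`n + μ`; so the ratio test makes the series of `e^{μ,δ}_{1,ρ}` converge absolutely everywhere. For
`ρ ≤ 0` the factors `1/Γ(δ - ρn)` are themselves eventually nonincreasing in absolute value.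
Multiplied by `z^{δ-1}`, the `n`-th term at `c z^{-ρ}` is a constant multiple of `z^{δ-1-ρn}`, and
`(s - 1)/Γ(s) = 1/Γ(s - 1)` turns its derivative into the corresponding term for `δ - 1`. These
derivatives are dominated near `z` by a convergent series of the same kind, so the sum may be
differentiated termwise.
-/

open Filter Topology

lemma inv_Gamma_sub_one (s : ℝ) : (Real.Gamma (s - 1))⁻¹ = (s - 1) * (Real.Gamma s)⁻¹ := by
  rcases eq_or_ne (s - 1) 0 with h | h
  · simp [h, Real.Gamma_zero]
  · rw [← sub_add_cancel s 1, Real.Gamma_add_one h, mul_inv, sub_add_cancel,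
      mul_inv_cancel_left₀ h]

lemma abs_inv_Gamma_le_Gamma_one_sub {s : ℝ} (hs : s < 1) :
    |(Real.Gamma s)⁻¹| ≤ Real.Gamma (1 - s) := by
  have hpos : 0 < Real.Gamma (1 - s) := Real.Gamma_pos_of_pos (sub_pos.2 hs)
  have hreflection : (Real.Gamma s)⁻¹ =
      Real.Gamma (1 - s) * (Real.sin (Real.pi * s) / Real.pi) := by
    rw [← inv_div, ← Real.Gamma_mul_Gamma_one_sub, mul_inv, mul_left_comm,
      mul_inv_cancel₀ hpos.ne', mul_one]
  have hsin : |Real.sin (Real.pi * s) / Real.pi| ≤ 1 := by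
    rw [abs_div, abs_of_pos Real.pi_pos, div_le_one Real.pi_pos]
    linarith [Real.abs_sin_le_one (Real.pi * s), Real.pi_gt_three]
  rw [hreflection, abs_mul, abs_of_pos hpos]
  exact mul_le_of_le_one_right hpos.le hsin

/-- Wendel's inequality. -/
lemma Gamma_add_le_rpow_mul_Gamma {x t : ℝ} (hx : 0 < x) (ht0 : 0 < t) (ht1 : t < 1) :
    Real.Gamma (x + t) ≤ x ^ t * Real.Gamma x := by
  have hΓ : 0 < Real.Gamma x := Real.Gamma_pos_of_pos hx
  calc Real.Gamma (x + t) = Real.Gamma ((1 - t) * x + t * (x + 1)) := by ring_nf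
    _ ≤ Real.Gamma x ^ (1 - t) * Real.Gamma (x + 1) ^ t :=
        Real.Gamma_mul_add_mul_le_rpow_Gamma_mul_rpow_Gamma hx (by linarith) (sub_pos.2 ht1) ht0
          (sub_add_cancel 1 t)
    _ = x ^ t * (Real.Gamma x ^ (1 - t) * Real.Gamma x ^ t) := by
        rw [Real.Gamma_add_one hx.ne', Real.mul_rpow hx.le hΓ.le, mul_left_comm]
    _ = x ^ t * Real.Gamma x := by
        rw [← Real.rpow_add hΓ, sub_add_cancel, Real.rpow_one]

lemma summable_pow_mul_div_Gamma_of_ratio_le {b : ℕ → ℝ} {μ κ : ℝ} (hκ : κ < 1)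
    (hb : ∀ᶠ n : ℕ in atTop, |b (n + 1)| ≤ (n + μ) ^ κ * |b n|) (z : ℝ) :
    Summable fun n : ℕ => z ^ n * b n / Real.Gamma (n + μ) := by
  have htop : Tendsto (fun n : ℕ => (n : ℝ) + μ) atTop atTop :=
    tendsto_atTop_add_const_right _ _ tendsto_natCast_atTop_atTop
  have hratio : Tendsto (fun n : ℕ => |z| * ((n : ℝ) + μ) ^ (-(1 - κ))) atTop (𝓝 0) := by
    simpa using ((tendsto_rpow_neg_atTop (sub_pos.2 hκ)).comp htop).const_mul |z|
  refine summable_of_ratio_norm_eventually_le one_half_lt_one ?_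
  filter_upwards [hb, htop.eventually_gt_atTop 0, hratio.eventually_le_const one_half_pos]
    with n hbn hn hsmall
  have hΓ : 0 < Real.Gamma (n + μ) := Real.Gamma_pos_of_pos hn
  have hΓ_succ : Real.Gamma ((n + 1 : ℕ) + μ) = (n + μ) * Real.Gamma (n + μ) := by
    rw [← Real.Gamma_add_one hn.ne', Nat.cast_succ, add_right_comm]
  simp only [Real.norm_eq_abs, abs_div, abs_mul, abs_pow, hΓ_succ, abs_of_pos hn, abs_of_pos hΓ]
  calc |z| ^ (n + 1) * |b (n + 1)| / ((n + μ) * Real.Gamma (n + μ))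
      ≤ |z| ^ (n + 1) * ((n + μ) ^ κ * |b n|) / ((n + μ) * Real.Gamma (n + μ)) := by gcongr
    _ = |z| * (n + μ) ^ (-(1 - κ)) * (|z| ^ n * |b n| / Real.Gamma (n + μ)) := by
        rw [neg_sub, Real.rpow_sub_one hn.ne']
        field_simp
        ring
    _ ≤ 1 / 2 * (|z| ^ n * |b n| / Real.Gamma (n + μ)) := by gcongr

lemma eventually_abs_Gamma_succ_le (a μ : ℝ) {ρ : ℝ} (hρ0 : 0 < ρ) (hρ1 : ρ < 1) :
    ∀ᶠ n : ℕ in atTop, |Real.Gamma (a + ρ * (n + 1 : ℕ))| ≤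
      (n + μ) ^ ρ * |Real.Gamma (a + ρ * n)| := by
  have htop : Tendsto (fun n : ℕ => a + ρ * n) atTop atTop :=
    tendsto_atTop_add_const_left _ _ (tendsto_natCast_atTop_atTop.const_mul_atTop hρ0)
  have hgap : Tendsto (fun n : ℕ => (1 - ρ) * n) atTop atTop :=
    tendsto_natCast_atTop_atTop.const_mul_atTop (sub_pos.2 hρ1)
  filter_upwards [htop.eventually_gt_atTop 0, hgap.eventually_ge_atTop (a - μ)] with n hn hle
  have hΓ : 0 < Real.Gamma (a + ρ * n) := Real.Gamma_pos_of_pos hn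
  have hsucc : a + ρ * (n + 1 : ℕ) = a + ρ * n + ρ := by push_cast; ring
  rw [hsucc, abs_of_pos hΓ, abs_of_pos (Real.Gamma_pos_of_pos (add_pos hn hρ0))]
  have hbase : a + ρ * n ≤ n + μ := by linarith
  exact (Gamma_add_le_rpow_mul_Gamma hn hρ0 hρ1).trans (by gcongr)

lemma eventually_abs_inv_Gamma_succ_le (a : ℝ) {r : ℝ} (hr : 0 ≤ r) :
    ∀ᶠ n : ℕ in atTop, |(Real.Gamma (a + r * (n + 1 : ℕ)))⁻¹| ≤ |(Real.Gamma (a + r * n))⁻¹| := by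
  rcases hr.eq_or_lt with rfl | hr
  · simp
  have htop : Tendsto (fun n : ℕ => a + r * n) atTop atTop :=
    tendsto_atTop_add_const_left _ _ (tendsto_natCast_atTop_atTop.const_mul_atTop hr)
  filter_upwards [htop.eventually_ge_atTop 2] with n hn
  have hlt : a + r * n ≤ a + r * (n + 1 : ℕ) := by gcongr; exact n.le_succ
  have hΓ : 0 < Real.Gamma (a + r * n) := Real.Gamma_pos_of_pos (two_pos.trans_le hn)
  have hmono := Real.Gamma_strictMonoOn_Ici.monotoneOn hn (hn.trans hlt) hlt
  rw [abs_of_pos (inv_pos.2 hΓ), abs_of_pos (inv_pos.2 (hΓ.trans_le hmono))]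
  gcongr

lemma summable_wrightE_term (μ δ z : ℝ) {ρ : ℝ} (hρ : ρ < 1) :
    Summable fun n : ℕ => z ^ n / (Real.Gamma (n + μ) * Real.Gamma (δ - ρ * n)) := by
  rcases le_or_gt ρ 0 with hρ0 | hρ0
  · have hratio : ∀ᶠ n : ℕ in atTop, |(Real.Gamma (δ + -ρ * (n + 1 : ℕ)))⁻¹| ≤
        (n + μ) ^ (0 : ℝ) * |(Real.Gamma (δ + -ρ * n))⁻¹| := by
      simpa only [Real.rpow_zero, one_mul] using
        eventually_abs_inv_Gamma_succ_le δ (neg_nonneg.2 hρ0)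
    refine (summable_pow_mul_div_Gamma_of_ratio_le
      (b := fun n => (Real.Gamma (δ + -ρ * n))⁻¹) zero_lt_one hratio z).congr fun n => ?_
    rw [neg_mul, ← sub_eq_add_neg, ← div_eq_mul_inv, div_div, mul_comm (Real.Gamma _)]
  · have hmajorant := summable_pow_mul_div_Gamma_of_ratio_le
      (b := fun n => Real.Gamma (1 - δ + ρ * n)) hρ
      (eventually_abs_Gamma_succ_le (1 - δ) μ hρ0 hρ) |z|
    refine summable_of_isBigO_nat hmajorant (Asymptotics.IsBigO.of_bound 1 ?_)
    have htop : Tendsto (fun n : ℕ => ρ * (n : ℝ)) atTop atTop :=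
      tendsto_natCast_atTop_atTop.const_mul_atTop hρ0
    filter_upwards [htop.eventually_gt_atTop (δ - 1)] with n hn
    have hinv : |(Real.Gamma (δ - ρ * n))⁻¹| ≤ |Real.Gamma (1 - δ + ρ * n)| := by
      rw [show 1 - δ + ρ * n = 1 - (δ - ρ * n) by ring]
      exact (abs_inv_Gamma_le_Gamma_one_sub (by linarith)).trans (le_abs_self _)
    calc ‖z ^ n / (Real.Gamma (n + μ) * Real.Gamma (δ - ρ * n))‖
        = |z| ^ n * |(Real.Gamma (δ - ρ * n))⁻¹| / |Real.Gamma (n + μ)| := by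
          rw [Real.norm_eq_abs, abs_div, abs_mul, abs_pow, abs_inv, ← div_eq_mul_inv, div_div,
            mul_comm |Real.Gamma (n + μ)|]
      _ ≤ |z| ^ n * |Real.Gamma (1 - δ + ρ * n)| / |Real.Gamma (n + μ)| := by gcongr
      _ = 1 * ‖|z| ^ n * Real.Gamma (1 - δ + ρ * n) / Real.Gamma (n + μ)‖ := by
          rw [one_mul, Real.norm_eq_abs, abs_div, abs_mul, abs_pow, abs_abs]

lemma rpow_mul_mul_rpow_neg_pow (a c ρ : ℝ) (n : ℕ) {w : ℝ} (hw : 0 < w) :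
    w ^ a * (c * w ^ (-ρ)) ^ n = c ^ n * w ^ (a - ρ * n) := by
  rw [mul_pow, ← Real.rpow_mul_natCast hw.le, sub_eq_add_neg, Real.rpow_add hw, neg_mul,
    mul_left_comm]

lemma hasDerivAt_rpow_mul_wrightE_term (μ δ c ρ : ℝ) (n : ℕ) {w : ℝ} (hw : 0 < w) :
    HasDerivAt
      (fun x : ℝ => x ^ (δ - 1) *
        ((c * x ^ (-ρ)) ^ n / (Real.Gamma (n + μ) * Real.Gamma (δ - ρ * n))))
      (w ^ (δ - 2) *
        ((c * w ^ (-ρ)) ^ n / (Real.Gamma (n + μ) * Real.Gamma (δ - 1 - ρ * n)))) w := by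
  have hpow := (Real.hasDerivAt_rpow_const (p := δ - 1 - ρ * n) (Or.inl hw.ne')).const_mul
    (c ^ n / (Real.Gamma (n + μ) * Real.Gamma (δ - ρ * n)))
  refine (hpow.congr_of_eventuallyEq ?_).congr_deriv ?_
  · filter_upwards [lt_mem_nhds hw] with x hx
    rw [← mul_div_assoc, rpow_mul_mul_rpow_neg_pow _ c ρ n hx, mul_div_right_comm]
  · have hrec : (Real.Gamma (δ - 1 - ρ * n))⁻¹ =
        (δ - 1 - ρ * n) * (Real.Gamma (δ - ρ * n))⁻¹ := by
      rw [sub_right_comm, inv_Gamma_sub_one]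
    rw [← mul_div_assoc, rpow_mul_mul_rpow_neg_pow _ c ρ n hw, div_eq_mul_inv, div_eq_mul_inv,
      mul_inv, mul_inv, hrec, show δ - 1 - ρ * n - 1 = δ - 2 - ρ * n by ring]
    ring

lemma rpow_le_max_of_mem_Icc {a b w : ℝ} (p : ℝ) (ha : 0 < a) (hw : w ∈ Set.Icc a b) :
    w ^ p ≤ max (a ^ p) (b ^ p) := by
  rcases le_total 0 p with hp | hp
  · exact le_max_of_le_right (Real.rpow_le_rpow (ha.le.trans hw.1) hw.2 hp)
  · exact le_max_of_le_left (Real.rpow_le_rpow_of_nonpos ha hw.1 hp)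

lemma norm_rpow_mul_wrightE_term_le (μ δ c ρ p : ℝ) (n : ℕ) {a b w : ℝ} (ha : 0 < a)
    (hw : w ∈ Set.Icc a b) :
    ‖w ^ p * ((c * w ^ (-ρ)) ^ n / (Real.Gamma (n + μ) * Real.Gamma (δ - ρ * n)))‖ ≤
      max (a ^ p) (b ^ p) * |(c * max (a ^ (-ρ)) (b ^ (-ρ))) ^ n /
        (Real.Gamma (n + μ) * Real.Gamma (δ - ρ * n))| := by
  have hw0 : 0 < w := ha.trans_le hw.1
  have hp := rpow_le_max_of_mem_Icc p ha hw
  have hρ := rpow_le_max_of_mem_Icc (-ρ) ha hw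
  have hpos := Real.rpow_pos_of_pos hw0 (-ρ)
  rw [Real.norm_eq_abs, abs_mul, abs_of_pos (Real.rpow_pos_of_pos hw0 p)]
  simp only [abs_div, abs_pow, abs_mul c, abs_of_pos hpos, abs_of_pos (hpos.trans_le hρ)]
  gcongr

theorem wright_power_deriv_neg_exponent_general (μ δ c : ℝ) {ρ : ℝ} (hρ : ρ < 1)
    {z : ℝ} (hz : 0 < z) :
    HasDerivAt (fun w : ℝ => w ^ (δ - 1) * wrightE ρ μ δ (c * w ^ (-ρ)))
      (z ^ (δ - 2) * wrightE ρ μ (δ - 1) (c * z ^ (-ρ))) z := by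
  have ha : 0 < z / 2 := half_pos hz
  have hmem : z ∈ Set.Ioo (z / 2) (2 * z) := ⟨half_lt_self hz, by linarith⟩
  have hmajorant := (summable_wrightE_term μ (δ - 1)
    (c * max ((z / 2) ^ (-ρ)) ((2 * z) ^ (-ρ))) hρ).abs.mul_left
      (max ((z / 2) ^ (δ - 2)) ((2 * z) ^ (δ - 2)))
  simp only [wrightE, ← tsum_mul_left]
  exact hasDerivAt_tsum_of_isPreconnected hmajorant isOpen_Ioo isPreconnected_Ioo
    (fun n w hw => hasDerivAt_rpow_mul_wrightE_term μ δ c ρ n (ha.trans hw.1))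
    (fun n w hw => norm_rpow_mul_wrightE_term_le μ (δ - 1) c ρ (δ - 2) n ha
      (Set.Ioo_subset_Icc_self hw))
    hmem ((summable_wrightE_term μ δ _ hρ).mul_left _) hmem

/- STATEMENT 11: fourth differentiation formula in (3.2):
`(d/dz)( z^{δ−1}·e^{μ,δ}_{1,ρ}(c·z^{−ρ}) ) = z^{δ−2}·e^{μ,δ−1}_{1,ρ}(c·z^{−ρ})` for `z > 0`. -/
theorem wright_power_deriv_neg_exponent (μ δ c ρ : ℝ) (hρ0 : 0 < ρ) (hρ1 : ρ < 1)
    (z : ℝ) (hz : 0 < z) :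
    HasDerivAt (fun w : ℝ => w ^ (δ - 1) * wrightE ρ μ δ (c * w ^ (-ρ)))
      (z ^ (δ - 2) * wrightE ρ μ (δ - 1) (c * z ^ (-ρ))) z :=
  wright_power_deriv_neg_exponent_general μ δ c hρ1 hz
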